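/- arXiv:1103.0039 — 2 statements merged into one kernel-verified Lean document; each statement's English description precedes it below -/
import Mathlib

section
/- For every even integer n > 2, writing n = 2m, and for every integer t ≥ 1, the number of n×n integer matrices lying in tP(D_n) equals Σ_{k=0}^{2n−3} (C(2n, k+1) − 2·C(2n−m, k+1−m) + C(n, k+1−2m)) · C(t−1, k). -/
/-!
Write `R_u : i ↦ i + u` for the rotations and `F_v : i ↦ v - i` for the reflections, with indices
modulo `n = 2m`. A nonnegative combination `∑ a_u R_u + ∑ b_v F_v` of total weight `t` has
`(i, j)` entry `a_{j-i} + b_{i+j}`. Since `n` is even, `j - i` and `i + j` have the same parity,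
and every pair of residues of the same parity arises in this way (`exists_sub_add_eq`).
Hence, separately for each parity, a constant may be moved from the `b_v` to the `a_u`
without changing the matrix, and these are the only relations. Normalizing so that the minimum of
the `b_v` is zero in each parity class gives unique representatives, and for those the matrix is
integral exactly when all weights are (`weightMatrix_injOn`, `exists_normalized`).

The lattice points of `t • P(D_n)` therefore correspond to compositions of `t` into `2n = 4m`
nonnegative parts that vanish somewhere on each of two disjoint blocks of size `m`.
Inclusion–exclusion and stars and bars (`card_normalizedWeights`) count them as
`C(4m+t-1, 4m-1) - 2 C(3m+t-1, 4m-1) + C(2m+t-1, 4m-1)`, and Vandermonde's identity turns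
this into the stated sum (`sum_formula`).
-/

open Pointwise

/-- The permutation matrix of a permutation `g` of `Fin n`. -/
noncomputable def permMatrix (n : ℕ) (g : Equiv.Perm (Fin n)) :
    Matrix (Fin n) (Fin n) ℝ :=
  Matrix.of fun i j => if g i = j then (1 : ℝ) else 0

/-- The permutation polytope of a set of permutations. -/
noncomputable def permPolytope (n : ℕ) (G : Set (Equiv.Perm (Fin n))) :
    Set (Matrix (Fin n) (Fin n) ℝ) :=
  convexHull ℝ (permMatrix n '' G)

/-- A real matrix all of whose entries are integers. -/
def IsIntegerMatrix {ι κ : Type*} (X : Matrix ι κ ℝ) : Prop :=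
  ∀ i j, ∃ z : ℤ, X i j = (z : ℝ)

/-- `latticePointCount P t` is the number of integer matrices in the dilation `t • P`. -/
noncomputable def latticePointCount {ι : Type*} (P : Set (Matrix ι ι ℝ)) (t : ℕ) : ℕ :=
  {X : Matrix ι ι ℝ | X ∈ (t : ℝ) • P ∧ IsIntegerMatrix X}.ncard

/-- The dihedral group of permutations of `Fin n`, generated by the rotation
`finRotate n : i ↦ i + 1 (mod n)` and the reflection `Fin.revPerm : i ↦ n - 1 - i`:
it consists of the rotations `r^k` and the reflections `f * r^k`. -/
def dihedralSet (n : ℕ) : Set (Equiv.Perm (Fin n)) :=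
  {g | ∃ k : ℕ, g = (finRotate n) ^ k ∨ g = Fin.revPerm * (finRotate n) ^ k}

/-- The binomial coefficient `C(a, b)` with integer lower index, interpreted as `0`
when `b < 0`. -/
def chooseZ (a : ℕ) (b : ℤ) : ℤ :=
  if 0 ≤ b then (a.choose b.toNat : ℤ) else 0


/-! ### Compositions and binomial sums -/

/-- Stars and bars. -/
lemma card_compositions {α : Type*} [Fintype α] [DecidableEq α] (t : ℕ) :
    (Finset.piAntidiag (Finset.univ : Finset α) t).card
      = (Fintype.card α + t - 1).choose t := by
  rw [← Sym.card_sym_eq_choose, ← Fintype.card_coe]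
  exact Fintype.card_congr
    ((Equiv.subtypeEquivRight fun f => by simp).trans (Sym.equivNatSumOfFintype α t).symm)

/-- Compositions of `t` that are positive on `T`: removing one unit at each element of `T` leaves
a composition of `t - #T`. If `t < #T`, both sides vanish. -/
lemma card_compositions_pos {α : Type*} [Fintype α] [DecidableEq α] (T : Finset α) (t : ℕ)
    (hα : 2 ≤ Fintype.card α) (ht : 1 ≤ t) :
    ((Finset.piAntidiag (Finset.univ : Finset α) t).filter (fun f => ∀ x ∈ T, 1 ≤ f x)).card
      = (Fintype.card α - T.card + (t - 1)).choose (Fintype.card α - 1) := by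
  have hT : T.card ≤ Fintype.card α := T.card_le_univ
  have hsum : ∑ x, (if x ∈ T then 1 else 0) = T.card := by simp
  rcases Nat.lt_or_ge t T.card with h | h
  · rw [Nat.choose_eq_zero_of_lt (by omega), Finset.card_eq_zero, Finset.filter_eq_empty_iff]
    intro f hf hpos
    have hf' : ∑ x, f x = t := (Finset.mem_piAntidiag.1 hf).1
    have : ∑ x, (if x ∈ T then 1 else 0) ≤ ∑ x, f x := by
      refine Finset.sum_le_sum fun x _ => ?_
      split_ifs with hx
      · exact hpos x hx
      · exact Nat.zero_le _
    omega
  · have h1 : Fintype.card α - T.card + (t - 1) = Fintype.card α + (t - T.card) - 1 := by omega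
    have h2 : Fintype.card α - 1 = Fintype.card α + (t - T.card) - 1 - (t - T.card) := by omega
    rw [h1, h2, Nat.choose_symm (by omega), ← card_compositions]
    symm
    refine Finset.card_bij (fun f _ x => f x + if x ∈ T then 1 else 0) ?_ ?_ ?_
    · intro f hf
      have hf' : ∑ x, f x = t - T.card := (Finset.mem_piAntidiag.1 hf).1
      simp only [Finset.mem_piAntidiag, Finset.mem_filter, Finset.sum_add_distrib, hsum]
      refine ⟨⟨by omega, by simp⟩, fun x hx => by simp [hx]⟩
    · intro f _ g _ hfg
      funext x
      simpa using congrFun hfg x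
    · intro f hf
      simp only [Finset.mem_piAntidiag, Finset.mem_filter] at hf
      have hf' : ∑ x, f x = t := hf.1.1
      have hfx : ∀ x, f x - (if x ∈ T then 1 else 0) + (if x ∈ T then 1 else 0) = f x := by
        intro x
        split_ifs with hx
        · have := hf.2 x hx
          omega
        · rfl
      refine ⟨fun x => f x - if x ∈ T then 1 else 0, ?_, funext hfx⟩
      have := Finset.sum_congr (rfl : (Finset.univ : Finset α) = _) (fun x _ => hfx x)
      rw [Finset.sum_add_distrib, hsum] at this
      simp only [Finset.mem_piAntidiag]
      exact ⟨by omega, by simp⟩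

/-- Vandermonde's identity in the index convention of the theorem, using
`C(N - c, k + 1 - c) = C(N - c, N - 1 - k)`. -/
lemma vandermonde_chooseZ (N c s : ℕ) (hN : 1 ≤ N) (hc : c ≤ N) :
    ∑ k ∈ Finset.range N, chooseZ (N - c) ((k : ℤ) + 1 - c) * chooseZ s k
      = ((N - c + s).choose (N - 1) : ℕ) := by
  rw [add_comm (N - c) s, Nat.add_choose_eq,
    Finset.Nat.sum_antidiagonal_eq_sum_range_succ (fun a b => s.choose a * (N - c).choose b)]
  push_cast
  rw [Nat.succ_eq_add_one, Nat.sub_add_cancel hN]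
  refine Finset.sum_congr rfl fun k hk => ?_
  rw [Finset.mem_range] at hk
  have h1 : chooseZ s k = s.choose k := by simp [chooseZ]
  rw [h1, mul_comm]
  congr 1
  unfold chooseZ
  split_ifs with h
  · have e : ((k : ℤ) + 1 - c).toNat = N - c - (N - 1 - k) := by omega
    rw [e, Nat.choose_symm (by omega)]
  · rw [Nat.choose_eq_zero_of_lt (by omega)]; rfl

lemma chooseZ_natCast (a b : ℕ) : chooseZ a b = a.choose b := by simp [chooseZ]

/-- The sum evaluates to three binomial coefficients. Vandermonde's identity needs two further
terms, `k = 4m - 2` and `k = 4m - 1`, but their coefficients `4m - 2 · 3m + 2m` and `1 - 2 + 1`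
vanish. -/
lemma sum_formula (m t : ℕ) (hm : 1 ≤ m) :
    ∑ k ∈ Finset.range (2 * (2 * m) - 2),
          (chooseZ (2 * (2 * m)) ((k : ℤ) + 1)
              - 2 * chooseZ (2 * (2 * m) - m) ((k : ℤ) + 1 - (m : ℤ))
              + chooseZ (2 * m) ((k : ℤ) + 1 - 2 * (m : ℤ)))
            * chooseZ (t - 1) (k : ℤ)
      = ((4 * m + (t - 1)).choose (4 * m - 1) : ℤ)
        - 2 * ((4 * m - m + (t - 1)).choose (4 * m - 1) : ℤ)
        + ((4 * m - 2 * m + (t - 1)).choose (4 * m - 1) : ℤ) := by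
  have v0 := vandermonde_chooseZ (4 * m) 0 (t - 1) (by omega) (by omega)
  have v1 := vandermonde_chooseZ (4 * m) m (t - 1) (by omega) (by omega)
  have v2 := vandermonde_chooseZ (4 * m) (2 * m) (t - 1) (by omega) (by omega)
  rw [Nat.sub_zero] at v0
  rw [← v0, ← v1, ← v2, Finset.mul_sum, ← Finset.sum_sub_distrib, ← Finset.sum_add_distrib]
  have e : 4 * m = (2 * (2 * m) - 2) + 1 + 1 := by omega
  have e0 : 2 * (2 * m) = 4 * m := by ring
  have e2 : 4 * m - 2 * m = 2 * m := by omega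
  have hr : Finset.range (4 * m) = Finset.range ((2 * (2 * m) - 2) + 1 + 1) := by rw [← e]
  rw [hr, Finset.sum_range_succ, Finset.sum_range_succ, e2, e0]
  have a1 : (((4 * m - 2 : ℕ) : ℤ) + 1 - (0 : ℕ)) = ((4 * m - 1 : ℕ) : ℤ) := by omega
  have a2 : (((4 * m - 2 : ℕ) : ℤ) + 1 - m) = ((4 * m - m - 1 : ℕ) : ℤ) := by omega
  have a3 : (((4 * m - 2 : ℕ) : ℤ) + 1 - (2 * m : ℕ)) = ((2 * m - 1 : ℕ) : ℤ) := by omega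
  have b1 : (((4 * m - 2 + 1 : ℕ) : ℤ) + 1 - (0 : ℕ)) = ((4 * m : ℕ) : ℤ) := by omega
  have b2 : (((4 * m - 2 + 1 : ℕ) : ℤ) + 1 - m) = ((4 * m - m : ℕ) : ℤ) := by omega
  have b3 : (((4 * m - 2 + 1 : ℕ) : ℤ) + 1 - (2 * m : ℕ)) = ((2 * m : ℕ) : ℤ) := by omega
  have pen : ∀ a : ℕ, 1 ≤ a → a.choose (a - 1) = a := fun a ha => by
    rw [Nat.choose_symm ha, Nat.choose_one_right]
  rw [a1, a2, a3, b1, b2, b3]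
  simp only [chooseZ_natCast, Nat.choose_self]
  rw [pen _ (by omega), pen _ (by omega), pen _ (by omega)]
  have c1 : ((4 * m - m : ℕ) : ℤ) = 3 * m := by omega
  rw [c1]
  push_cast
  simp only [sub_zero]
  have hs : ∀ A A' B C : ℤ, A = A' →
      A = A' + (4 * m * B - 2 * (3 * m * B) + 2 * m * B) + (1 * C - 2 * (1 * C) + 1 * C) := by
    intro A A' B C h
    rw [h]; ring
  exact hs _ _ _ _ (Finset.sum_congr rfl fun k _ => by ring)

/-! ### The dihedral polytope as a projected simplex -/

lemma parity_sub_eq_add {n : ℕ} (h2 : 2 ∣ n) (i j : Fin n) :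
    (j - i).val % 2 = (i + j).val % 2 := by
  rw [Fin.val_sub, Fin.val_add, Nat.mod_mod_of_dvd _ h2, Nat.mod_mod_of_dvd _ h2]
  omega

/-- Given residues `u`, `v` of equal parity, the rotation by `u` and the reflection with index
`v` share a matrix position: `2i = v - u` is solvable modulo the even number `n`. -/
lemma exists_sub_add_eq {n : ℕ} [NeZero n] (h2 : 2 ∣ n) {u v : Fin n}
    (h : u.val % 2 = v.val % 2) : ∃ i j : Fin n, j - i = u ∧ i + j = v := by
  have he : (v - u).val % 2 = 0 := by
    rw [Fin.val_sub, Nat.mod_mod_of_dvd _ h2]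
    omega
  have hlt := (v - u).isLt
  let i : Fin n := ⟨(v - u).val / 2, by omega⟩
  have hi : i + i = v - u := by
    apply Fin.ext
    rw [Fin.val_add, Nat.mod_eq_of_lt] <;> simp only [i] <;> omega
  refine ⟨i, i + u, by abel, ?_⟩
  rw [← add_assoc, hi]
  abel

/-- The matrix `∑ w_g M(g)` of a weight function `w` on the dihedral group. The index `inl u` stands
for the rotation `i ↦ i + u` and `inr v` for the reflection `i ↦ v - i` (arithmetic modulo `n`),
so exactly one rotation and one reflection contribute to each entry. -/
def weightMatrix (n : ℕ) : (Fin n ⊕ Fin n → ℝ) →ₗ[ℝ] Matrix (Fin n) (Fin n) ℝ where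
  toFun w := Matrix.of fun i j => w (Sum.inl (j - i)) + w (Sum.inr (i + j))
  map_add' w w' := by ext i j; simp only [Matrix.of_apply, Matrix.add_apply, Pi.add_apply]; ring
  map_smul' c w := by
    ext i j
    simp only [Matrix.of_apply, Matrix.smul_apply, Pi.smul_apply, smul_eq_mul, RingHom.id_apply]
    ring

lemma weightMatrix_apply {n : ℕ} (w : Fin n ⊕ Fin n → ℝ) (i j : Fin n) :
    weightMatrix n w i j = w (Sum.inl (j - i)) + w (Sum.inr (i + j)) := rfl

lemma finRotate_pow_val {n : ℕ} (k : ℕ) (i : Fin n) :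
    ((finRotate n ^ k) i).val = (i.val + k) % n := by
  have := i.neZero
  induction k with
  | zero => simp [Nat.mod_eq_of_lt i.isLt]
  | succ k ih =>
    rw [pow_succ', Equiv.Perm.mul_apply, finRotate_apply, Fin.val_add, ih, Fin.val_one']
    simp [add_assoc]

lemma permMatrix_rotation {n : ℕ} [NeZero n] (k : ℕ) :
    permMatrix n (finRotate n ^ k)
      = weightMatrix n (Pi.single (Sum.inl (Fin.ofNat n k)) 1) := by
  have e : ∀ i : Fin n, (finRotate n ^ k) i = i + Fin.ofNat n k := fun i => by
    apply Fin.ext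
    rw [finRotate_pow_val, Fin.val_add]
    simp
  ext i j
  rw [weightMatrix_apply, permMatrix, Matrix.of_apply, e]
  simp [Pi.single_apply, sub_eq_iff_eq_add', eq_comm]

lemma permMatrix_reflection {n : ℕ} [NeZero n] (k : ℕ) :
    permMatrix n (Fin.revPerm * finRotate n ^ k)
      = weightMatrix n (Pi.single (Sum.inr (-1 - Fin.ofNat n k)) 1) := by
  have e : ∀ i : Fin n, (Fin.revPerm * finRotate n ^ k : Equiv.Perm (Fin n)) i
      = -1 - Fin.ofNat n k - i := fun i => by
    have e : (finRotate n ^ k) i = i + Fin.ofNat n k := by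
      apply Fin.ext
      rw [finRotate_pow_val, Fin.val_add]
      simp
    have hrev : ∀ x : Fin n, Fin.rev x = -1 - x := fun x => by
      rw [eq_sub_iff_add_eq, eq_neg_iff_add_eq_zero]
      apply Fin.ext
      have := x.isLt
      rw [Fin.val_add, Fin.val_add, Fin.val_rev, Fin.val_one']
      simp only [Nat.mod_add_mod, Nat.add_mod_mod, Fin.val_zero]
      rw [show n - (x.val + 1) + x.val + 1 = n by omega, Nat.mod_self]
    rw [Equiv.Perm.mul_apply, e, Fin.revPerm_apply, hrev]
    abel
  ext i j
  rw [weightMatrix_apply, permMatrix, Matrix.of_apply, e]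
  simp [Pi.single_apply, eq_sub_iff_add_eq', eq_comm]

lemma permPolytope_dihedralSet (n : ℕ) [NeZero n] :
    permPolytope n (dihedralSet n) = weightMatrix n '' stdSimplex ℝ (Fin n ⊕ Fin n) := by
  rw [permPolytope, ← convexHull_rangle_single_eq_stdSimplex, LinearMap.image_convexHull]
  congr 1
  ext X
  constructor
  · rintro ⟨g, ⟨k, rfl | rfl⟩, rfl⟩
    · exact ⟨_, ⟨_, rfl⟩, (permMatrix_rotation k).symm⟩
    · exact ⟨_, ⟨_, rfl⟩, (permMatrix_reflection k).symm⟩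
  · rintro ⟨_, ⟨u | v, rfl⟩, rfl⟩
    · refine ⟨_, ⟨u.val, Or.inl rfl⟩, ?_⟩
      rw [permMatrix_rotation, Fin.ofNat_val_eq_self]
    · refine ⟨_, ⟨(-1 - v).val, Or.inr rfl⟩, ?_⟩
      rw [permMatrix_reflection, Fin.ofNat_val_eq_self, sub_sub_cancel]

lemma mem_smul_permPolytope_iff {n : ℕ} [NeZero n] {t : ℕ} (ht : 1 ≤ t)
    (X : Matrix (Fin n) (Fin n) ℝ) :
    X ∈ (t : ℝ) • permPolytope n (dihedralSet n) ↔
      ∃ w : Fin n ⊕ Fin n → ℝ, (∀ x, 0 ≤ w x) ∧ ∑ x, w x = t ∧ weightMatrix n w = X := by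
  have ht0 : (0 : ℝ) < t := by exact_mod_cast ht
  rw [permPolytope_dihedralSet]
  constructor
  · rintro ⟨_, ⟨w, ⟨hw0, hw1⟩, rfl⟩, rfl⟩
    refine ⟨(t : ℝ) • w, fun x => mul_nonneg ht0.le (hw0 x), ?_, map_smul _ _ _⟩
    simp [← Finset.mul_sum, hw1]
  · rintro ⟨w, hw0, hw1, rfl⟩
    refine ⟨weightMatrix n ((t : ℝ)⁻¹ • w), ⟨_, ⟨fun x => ?_, ?_⟩, rfl⟩, ?_⟩
    · exact mul_nonneg (inv_nonneg.2 ht0.le) (hw0 x)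
    · simp [← Finset.mul_sum, hw1, ht0.ne']
    · simp [ht0.ne']

/-! ### Normalized weights -/

/-- The natural-number weights of total `t` that vanish on at least one reflection of each parity.
They represent each integer matrix of `t • P(D_n)` exactly once when `n` is even. -/
def normalizedWeights (n t : ℕ) : Finset (Fin n ⊕ Fin n → ℕ) :=
  (Finset.piAntidiag Finset.univ t).filter
    (fun w => ∀ r : ℕ, r < 2 → ∃ v : Fin n, v.val % 2 = r ∧ w (Sum.inr v) = 0)

/-- Normalized weights are determined by their matrix: `w (inl u)` is the minimum of the entries
`w (inl u) + w (inr v)` over `v` of the parity of `u`. -/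
lemma weightMatrix_injOn {n : ℕ} [NeZero n] (h2 : 2 ∣ n) (t : ℕ) :
    Set.InjOn (fun w : Fin n ⊕ Fin n → ℕ => weightMatrix n fun x => (w x : ℝ))
      (normalizedWeights n t) := by
  have key : ∀ w w' : Fin n ⊕ Fin n → ℕ,
      (weightMatrix n fun x => (w x : ℝ)) = (weightMatrix n fun x => (w' x : ℝ)) →
      ∀ u v : Fin n, u.val % 2 = v.val % 2 →
        w (Sum.inl u) + w (Sum.inr v) = w' (Sum.inl u) + w' (Sum.inr v) := by
    intro w w' h u v huv
    obtain ⟨i, j, rfl, rfl⟩ := exists_sub_add_eq h2 huv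
    have := congrFun (congrFun h i) j
    rw [weightMatrix_apply, weightMatrix_apply] at this
    exact_mod_cast this
  intro w hw w' hw' h
  replace hw := (Finset.mem_filter.1 (Finset.mem_coe.1 hw)).2
  replace hw' := (Finset.mem_filter.1 (Finset.mem_coe.1 hw')).2
  have hl : ∀ u, w (Sum.inl u) = w' (Sum.inl u) := fun u => by
    obtain ⟨v, hv, hv0⟩ := hw (u.val % 2) (Nat.mod_lt _ two_pos)
    obtain ⟨v', hv', hv0'⟩ := hw' (u.val % 2) (Nat.mod_lt _ two_pos)
    have h1 := key w w' h u v hv.symm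
    have h2 := key w w' h u v' hv'.symm
    omega
  funext x
  rcases x with u | v
  · exact hl u
  · have h1 := key w w' h v v rfl
    have h2 := hl v
    omega

/-- Within each parity class, subtracting the minimal reflection weight from all reflections and
adding it to all rotations changes neither the total weight nor the matrix. After this shift,
integrality of the matrix forces integrality of the weights. -/
lemma exists_normalized {n : ℕ} [NeZero n] (h2 : 2 ∣ n) {t : ℕ} {w : Fin n ⊕ Fin n → ℝ}
    (hw0 : ∀ x, 0 ≤ w x) (hw1 : ∑ x, w x = t) (hint : IsIntegerMatrix (weightMatrix n w)) :
    ∃ w' ∈ normalizedWeights n t, (weightMatrix n fun x => (w' x : ℝ)) = weightMatrix n w := by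
  have hpos : 0 < n := Nat.pos_of_neZero n
  have hmin : ∀ r : ℕ, ∃ v : Fin n, r < 2 → (v.val % 2 = r ∧
      ∀ v' : Fin n, v'.val % 2 = r → w (Sum.inr v) ≤ w (Sum.inr v')) := by
    intro r
    by_cases hr : r < 2
    · obtain ⟨v, hv, hvm⟩ := Finset.exists_min_image
        (Finset.univ.filter fun v : Fin n => v.val % 2 = r) (fun v => w (Sum.inr v))
        ⟨⟨r, by omega⟩, by simp; omega⟩
      refine ⟨v, fun _ => ⟨(Finset.mem_filter.1 hv).2, fun v' hv' => hvm v' ?_⟩⟩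
      simp [hv']
    · exact ⟨0, fun h => absurd h hr⟩
  choose v hv using hmin
  -- `c u` is the minimal reflection weight in the parity class of `u`.
  let c : Fin n → ℝ := fun u => w (Sum.inr (v (u.val % 2)))
  have hc : ∀ u, c u ≤ w (Sum.inr u) := fun u => (hv _ (Nat.mod_lt _ two_pos)).2 u rfl
  have hcv : ∀ r < 2, c (v r) = w (Sum.inr (v r)) := fun r hr => by
    simp only [c]
    rw [(hv r hr).1]
  let q : Fin n ⊕ Fin n → ℝ :=
    Sum.elim (fun u => w (Sum.inl u) + c u) (fun u => w (Sum.inr u) - c u)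
  have hq0 : ∀ x, 0 ≤ q x := by
    rintro (u | u)
    · exact add_nonneg (hw0 _) (hw0 _)
    · exact sub_nonneg.2 (hc u)
  have hq1 : ∑ x, q x = t := by
    rw [← hw1, Fintype.sum_sum_type, Fintype.sum_sum_type]
    simp only [q, Sum.elim_inl, Sum.elim_inr, Finset.sum_add_distrib, Finset.sum_sub_distrib]
    ring
  have hqw : weightMatrix n q = weightMatrix n w := by
    ext i j
    have : c (j - i) = c (i + j) := by simp only [c, parity_sub_eq_add h2 i j]
    simp only [weightMatrix_apply, q, Sum.elim_inl, Sum.elim_inr]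
    rw [this]; ring
  have hadd : ∀ u u' : Fin n, u.val % 2 = u'.val % 2 →
      ∃ z : ℤ, q (Sum.inl u) + q (Sum.inr u') = z := by
    intro u u' h
    obtain ⟨i, j, rfl, rfl⟩ := exists_sub_add_eq h2 h
    obtain ⟨z, hz⟩ := hint i j
    exact ⟨z, by rw [← hz, ← hqw, weightMatrix_apply]⟩
  have hqv : ∀ r < 2, q (Sum.inr (v r)) = 0 := fun r hr => sub_eq_zero.2 (hcv r hr).symm
  have hql : ∀ u, ∃ z : ℤ, q (Sum.inl u) = z := fun u => by
    have hu := Nat.mod_lt u.val two_pos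
    obtain ⟨z, hz⟩ := hadd u _ (hv _ hu).1.symm
    exact ⟨z, by rw [← hz, hqv _ hu, add_zero]⟩
  have hqi : ∀ x, ∃ k : ℕ, q x = k := by
    intro x
    have hz : ∃ z : ℤ, q x = z := by
      rcases x with u | u
      · exact hql u
      · obtain ⟨a, ha⟩ := hql u
        obtain ⟨b, hb⟩ := hadd u u rfl
        exact ⟨b - a, by push_cast; rw [← ha, ← hb]; ring⟩
    obtain ⟨z, hz⟩ := hz
    have h0 : 0 ≤ z := by
      have := hq0 x
      rw [hz] at this
      exact_mod_cast this
    exact ⟨z.toNat, by rw [hz]; exact_mod_cast (Int.toNat_of_nonneg h0).symm⟩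
  choose w' hw' using hqi
  have hqe : q = fun x => (w' x : ℝ) := funext hw'
  refine ⟨w', ?_, by rw [← hqe, hqw]⟩
  rw [normalizedWeights, Finset.mem_filter, Finset.mem_piAntidiag]
  refine ⟨⟨?_, by simp⟩, fun r hr => ⟨v r, (hv r hr).1, ?_⟩⟩
  · rw [hqe] at hq1
    change ∑ x, (w' x : ℝ) = t at hq1
    change ∑ x, w' x = t
    exact_mod_cast hq1
  · have := hqv r hr
    rw [hw'] at this
    exact_mod_cast this

lemma latticePointCount_eq_card {n : ℕ} [NeZero n] (h2 : 2 ∣ n) {t : ℕ} (ht : 1 ≤ t) :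
    latticePointCount (permPolytope n (dihedralSet n)) t = (normalizedWeights n t).card := by
  rw [latticePointCount, ← Set.ncard_coe_finset,
    ← (weightMatrix_injOn h2 t).ncard_image]
  congr 1
  ext X
  rw [Set.mem_ofPred_eq, mem_smul_permPolytope_iff ht]
  constructor
  · rintro ⟨⟨w, hw0, hw1, rfl⟩, hint⟩
    obtain ⟨w', hw', h⟩ := exists_normalized h2 hw0 hw1 hint
    exact ⟨w', hw', h⟩
  · rintro ⟨w, hw, rfl⟩
    have hw1 : ∑ x, w x = t := (Finset.mem_piAntidiag.1 (Finset.mem_filter.1 (Finset.mem_coe.1 hw)).1).1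
    refine ⟨⟨_, fun x => Nat.cast_nonneg _, by exact_mod_cast hw1, rfl⟩, fun i j =>
      ⟨w (Sum.inl (j - i)) + w (Sum.inr (i + j)), ?_⟩⟩
    change weightMatrix n (fun x => (w x : ℝ)) i j = _
    rw [weightMatrix_apply]
    push_cast
    rfl

/-! ### Counting normalized weights -/

/-- The reflections `i ↦ v - i` with `v` of parity `r`. -/
def reflectionClass (n r : ℕ) : Finset (Fin n ⊕ Fin n) :=
  (Finset.univ.filter fun v : Fin n => v.val % 2 = r).map Function.Embedding.inr

lemma card_reflectionClass (m : ℕ) {r : ℕ} (hr : r < 2) :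
    (reflectionClass (2 * m) r).card = m := by
  rw [reflectionClass, Finset.card_map, Finset.card_filter,
    Fin.sum_univ_eq_sum_range (fun k => if k % 2 = r then 1 else 0)]
  induction m with
  | zero => rfl
  | succ m ih =>
    rw [show 2 * (m + 1) = 2 * m + 1 + 1 by ring, Finset.sum_range_succ, Finset.sum_range_succ, ih]
    split_ifs <;> omega

/-- Inclusion–exclusion over the two parities: a composition fails to be normalized when it is
positive on a whole class of `m` reflections. -/
lemma card_normalizedWeights (m t : ℕ) (hm : 1 ≤ m) (ht : 1 ≤ t) :
    ((normalizedWeights (2 * m) t).card : ℤ)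
      = ((4 * m + (t - 1)).choose (4 * m - 1) : ℤ)
        - 2 * ((4 * m - m + (t - 1)).choose (4 * m - 1) : ℤ)
        + ((4 * m - 2 * m + (t - 1)).choose (4 * m - 1) : ℤ) := by
  have hcard : Fintype.card (Fin (2 * m) ⊕ Fin (2 * m)) = 4 * m := by
    simp; ring
  set T := reflectionClass (2 * m) with hT
  have hdisj : Disjoint (T 0) (T 1) := by
    rw [Finset.disjoint_left]
    simp only [hT, reflectionClass, Finset.mem_map, Finset.mem_filter]
    rintro _ ⟨u, ⟨-, hu⟩, rfl⟩ ⟨v, ⟨-, hv⟩, h⟩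
    have : v = u := Sum.inr_injective h
    subst this
    omega
  have c0 := card_compositions_pos (∅ : Finset (Fin (2 * m) ⊕ Fin (2 * m))) t (by omega) ht
  have c1 := card_compositions_pos (T 0) t (by omega) ht
  have c2 := card_compositions_pos (T 1) t (by omega) ht
  have c3 := card_compositions_pos (T 0 ∪ T 1) t (by omega) ht
  rw [hcard] at c0 c1 c2 c3
  rw [card_reflectionClass m (by norm_num)] at c1 c2
  rw [Finset.card_union_of_disjoint hdisj, card_reflectionClass m (by norm_num),
    card_reflectionClass m (by norm_num), ← two_mul] at c3
  rw [Finset.card_empty, Nat.sub_zero, Finset.filter_true_of_mem (by simp)] at c0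
  rw [← c0, ← c3]
  have c12 : 2 * ((4 * m - m + (t - 1)).choose (4 * m - 1) : ℤ)
      = (((Finset.piAntidiag Finset.univ t).filter fun w => ∀ x ∈ T 0, 1 ≤ w x).card : ℤ)
        + ((Finset.piAntidiag Finset.univ t).filter fun w => ∀ x ∈ T 1, 1 ≤ w x).card := by
    rw [c1, c2, two_mul]
  rw [c12]
  have hmem : ∀ w : Fin (2 * m) ⊕ Fin (2 * m) → ℕ,
      (∀ r < 2, ∃ v : Fin (2 * m), v.val % 2 = r ∧ w (Sum.inr v) = 0) ↔
        ¬ (∀ x ∈ T 0, 1 ≤ w x) ∧ ¬ (∀ x ∈ T 1, 1 ≤ w x) := by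
    intro w
    have : ∀ r, (∃ v : Fin (2 * m), v.val % 2 = r ∧ w (Sum.inr v) = 0) ↔
        ¬ ∀ x ∈ T r, 1 ≤ w x := by
      intro r
      simp [hT, reflectionClass]
    rw [← this, ← this]
    constructor
    · exact fun h => ⟨h 0 (by norm_num), h 1 (by norm_num)⟩
    · rintro ⟨h0, h1⟩ r hr
      interval_cases r
      · exact h0
      · exact h1
  have hite : ∀ (p q : Prop) [Decidable p] [Decidable q],
      (if ¬ p ∧ ¬ q then (1 : ℤ) else 0)
        = 1 - ((if p then 1 else 0) + (if q then 1 else 0)) + (if p ∧ q then 1 else 0) := by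
    intro p q _ _
    by_cases p <;> by_cases q <;> simp [*]
  rw [normalizedWeights]
  simp only [hmem, Finset.card_eq_sum_ones, Finset.sum_filter]
  push_cast
  rw [← Finset.sum_add_distrib, ← Finset.sum_sub_distrib, ← Finset.sum_add_distrib]
  refine Finset.sum_congr rfl fun w _ => ?_
  have hu : (∀ x ∈ T 0 ∪ T 1, 1 ≤ w x) ↔ (∀ x ∈ T 0, 1 ≤ w x) ∧ (∀ x ∈ T 1, 1 ≤ w x) := by
    simp only [Finset.mem_union, or_imp, forall_and]
  simp only [hu]
  exact hite _ _

/-- For even `n = 2m > 2` and `t ≥ 1`, the number of integer matrices in `t • P(D_n)` is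
`Σ_{k=0}^{2n-3} (C(2n, k+1) − 2 C(2n−m, k+1−m) + C(n, k+1−2m)) C(t−1, k)`. -/
theorem ehrhart_dihedral_even (n m : ℕ) (hn : 2 < n) (hnm : n = 2 * m) (t : ℕ) (ht : 1 ≤ t) :
    (latticePointCount (permPolytope n (dihedralSet n)) t : ℤ)
      = ∑ k ∈ Finset.range (2 * n - 2),
          (chooseZ (2 * n) ((k : ℤ) + 1) - 2 * chooseZ (2 * n - m) ((k : ℤ) + 1 - (m : ℤ))
              + chooseZ n ((k : ℤ) + 1 - 2 * (m : ℤ)))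
            * chooseZ (t - 1) (k : ℤ) := by
  subst hnm
  have hm : 1 ≤ m := by omega
  have : NeZero (2 * m) := ⟨by omega⟩
  rw [latticePointCount_eq_card (dvd_mul_right 2 m) ht, card_normalizedWeights m t hm ht,
    sum_formula m t hm]
end

section
/- For every integer n > 2, the dimension of the affine span of P(D_n) in the space of n×n real matrices equals 2n−2 if n is odd and 2n−3 if n is even. -/
/-- The linear map sending formal coefficients on the `n` rotations (left summand) and the `n`
reflections (right summand) to the corresponding linear combination of permutation matrices:
the rotation by `k` has its ones where `j - i = k`, and the reflection `rev ∘ (· + k)` where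
`rev j - i = k`. -/
def dihedralMap (n : ℕ) [NeZero n] :
    (Fin n ⊕ Fin n → ℝ) →ₗ[ℝ] Matrix (Fin n) (Fin n) ℝ where
  toFun x := Matrix.of fun i j => x (Sum.inl (j - i)) + x (Sum.inr (Fin.rev j - i))
  map_add' x y := by ext i j; simp; ring
  map_smul' c x := by ext i j; simp; ring

theorem dihedralMap_apply (n : ℕ) [NeZero n] (x : Fin n ⊕ Fin n → ℝ) (i j : Fin n) :
    dihedralMap n x i j = x (Sum.inl (j - i)) + x (Sum.inr (Fin.rev j - i)) := rfl

theorem ofNat_succ (n : ℕ) [NeZero n] (m : ℕ) :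
    Fin.ofNat n (m + 1) = Fin.ofNat n m + 1 := by
  ext
  simp only [Fin.val_ofNat, Fin.val_add, Fin.val_one', Nat.add_mod_mod, Nat.mod_add_mod]

theorem finRotate_pow_apply (n : ℕ) [NeZero n] (k : ℕ) (i : Fin n) :
    ((finRotate n) ^ k) i = i + Fin.ofNat n k := by
  obtain ⟨m, rfl⟩ := Nat.exists_eq_succ_of_ne_zero (NeZero.ne n)
  induction k with
  | zero => simp
  | succ k ih =>
    rw [pow_succ', Equiv.Perm.mul_apply, ih, finRotate_apply, ofNat_succ, add_assoc]

theorem dihedralMap_inl (n : ℕ) [NeZero n] (k : ℕ) :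
    dihedralMap n (Pi.single (Sum.inl (Fin.ofNat n k)) 1)
      = permMatrix n ((finRotate n) ^ k) := by
  ext i j
  have : j - i = Fin.ofNat n k ↔ i + Fin.ofNat n k = j := by
    rw [sub_eq_iff_eq_add, add_comm, eq_comm]
  simp [-Fin.ofNat_eq_cast, dihedralMap_apply, permMatrix, finRotate_pow_apply, Pi.single_apply,
    this]

theorem dihedralMap_inr (n : ℕ) [NeZero n] (k : ℕ) :
    dihedralMap n (Pi.single (Sum.inr (Fin.ofNat n k)) 1)
      = permMatrix n (Fin.revPerm * (finRotate n) ^ k) := by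
  ext i j
  have : Fin.rev j - i = Fin.ofNat n k ↔ Fin.rev (i + Fin.ofNat n k) = j := by
    rw [sub_eq_iff_eq_add, add_comm, eq_comm, Fin.rev_eq_iff]
  simp [-Fin.ofNat_eq_cast, dihedralMap_apply, permMatrix, finRotate_pow_apply, Pi.single_apply,
    this]

theorem permMatrix_image_dihedralSet (n : ℕ) [NeZero n] :
    permMatrix n '' dihedralSet n
      = dihedralMap n '' Set.range (fun s : Fin n ⊕ Fin n => (Pi.single s 1 : _ → ℝ)) := by
  ext M
  constructor
  · rintro ⟨g, ⟨k, rfl | rfl⟩, rfl⟩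
    · exact ⟨_, ⟨Sum.inl (Fin.ofNat n k), rfl⟩, dihedralMap_inl n k⟩
    · exact ⟨_, ⟨Sum.inr (Fin.ofNat n k), rfl⟩, dihedralMap_inr n k⟩
  · rintro ⟨_, ⟨k | k, rfl⟩, rfl⟩
    · refine ⟨_, ⟨k.val, Or.inl rfl⟩, ?_⟩
      rw [← dihedralMap_inl, Fin.ofNat_val_eq_self]
    · refine ⟨_, ⟨k.val, Or.inr rfl⟩, ?_⟩
      rw [← dihedralMap_inr, Fin.ofNat_val_eq_self]

/-- The entry in position `(0, j)` shows that a relation is determined by its reflection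
coefficients. -/
theorem ker_inl {n : ℕ} [NeZero n] {x : Fin n ⊕ Fin n → ℝ} (hx : dihedralMap n x = 0)
    (j : Fin n) : x (Sum.inl j) = - x (Sum.inr (Fin.rev j)) := by
  have h : dihedralMap n x 0 j = 0 := by rw [hx]; rfl
  rw [dihedralMap_apply, sub_zero, sub_zero] at h
  linarith

/-- Comparing the entries in positions `(0, rev (k + 2))` and `(1, rev (k + 1))`, which meet the
same rotation, shows that the reflection coefficients of a relation have period `2`. -/
theorem ker_periodic {n : ℕ} [NeZero n] {x : Fin n ⊕ Fin n → ℝ} (hx : dihedralMap n x = 0) :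
    Function.Periodic (fun m : ℕ => x (Sum.inr (Fin.ofNat n m))) 2 := by
  intro m
  have h : dihedralMap n x 1 (Fin.rev (Fin.ofNat n (m + 1))) = 0 := by rw [hx]; rfl
  rw [dihedralMap_apply, Fin.rev_rev, ker_inl hx] at h
  have h1 : Fin.ofNat n (m + 1) - 1 = Fin.ofNat n m := by
    rw [ofNat_succ, add_sub_cancel_right]
  have h2 : Fin.rev (Fin.rev (Fin.ofNat n (m + 1)) - 1) = Fin.ofNat n (m + 2) := by
    rw [Fin.rev_sub, Fin.rev_rev, ofNat_succ n (m + 1)]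
  rw [h1, h2] at h
  simp only
  linarith

/-- For odd `n` the reflection coefficients have the coprime periods `2` and `n`, so the relations
are the multiples of (sum of all rotations) - (sum of all reflections). -/
theorem finrank_ker_odd (n : ℕ) [NeZero n] (hn : Odd n) :
    Module.finrank ℝ (LinearMap.ker (dihedralMap n)) = 1 := by
  have : LinearMap.ker (dihedralMap n)
      = Submodule.span ℝ {Sum.elim (fun _ => (-1 : ℝ)) (fun _ => 1)} := by
    apply le_antisymm
    · intro x hx
      rw [LinearMap.mem_ker] at hx
      have hp := ker_periodic hx
      have h1 : ∀ m : ℕ, x (Sum.inr (Fin.ofNat n (m + 1))) = x (Sum.inr (Fin.ofNat n m)) := by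
        intro m
        obtain ⟨t, ht⟩ := hn
        -- `m + 1 ≡ m + (t + 1) * 2` modulo `n = 2 * t + 1`
        have := hp.nat_mul (t + 1) m
        rw [← this]
        congr 2
        ext
        simp only [Fin.val_ofNat]
        push_cast
        rw [show m + (t + 1) * 2 = m + 1 + n by omega, Nat.add_mod_right]
      have h2 : ∀ m : ℕ, x (Sum.inr (Fin.ofNat n m)) = x (Sum.inr 0) := by
        intro m
        induction m with
        | zero => rfl
        | succ m ih => rw [h1, ih]
      have h3 : ∀ k : Fin n, x (Sum.inr k) = x (Sum.inr 0) := by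
        intro k
        rw [← h2 k.val, Fin.ofNat_val_eq_self]
      rw [Submodule.mem_span_singleton]
      refine ⟨x (Sum.inr 0), ?_⟩
      ext (k | k)
      · simp [ker_inl hx, h3 k.rev]
      · simp [h3 k]
    · rw [Submodule.span_singleton_le_iff_mem, LinearMap.mem_ker]
      ext i j
      simp [dihedralMap_apply]
  rw [this]
  apply finrank_span_singleton
  intro h
  have := congrFun h (Sum.inr 0)
  simp at this

/-- For even `n` the reflection coefficients of a relation depend only on parity, and both values
are free: the rotations with index of one parity and the reflections with index of the other
parity cover the same half of a checkerboard, because `(j - i) + (rev j - i)` is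
`-1 - 2 * i` modulo the even number `n`, hence odd. -/
theorem finrank_ker_even (n : ℕ) [NeZero n] (hn : Even n) :
    Module.finrank ℝ (LinearMap.ker (dihedralMap n)) = 2 := by
  have hn2 : 2 ≤ n := by
    have := NeZero.ne n
    obtain ⟨t, ht⟩ := hn
    omega
  let L : (ℝ × ℝ) →ₗ[ℝ] (Fin n ⊕ Fin n → ℝ) :=
    { toFun := fun c => Sum.elim (fun k => - if Even k.val then c.2 else c.1)
        (fun k => if Even k.val then c.1 else c.2)
      map_add' := by
        intro c d
        ext (k | k) <;> by_cases h : Even k.val <;> simp [h] <;> ring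
      map_smul' := by
        intro c d
        ext (k | k) <;> by_cases h : Even k.val <;> simp [h] }
  have hL : LinearMap.ker (dihedralMap n) = LinearMap.range L := by
    apply le_antisymm
    · intro x hx
      rw [LinearMap.mem_ker] at hx
      have hp := ker_periodic hx
      have h3 : ∀ k : Fin n, x (Sum.inr k)
          = if Even k.val then x (Sum.inr (Fin.ofNat n 0)) else x (Sum.inr (Fin.ofNat n 1)) := by
        intro k
        have := hp.map_mod_nat k.val
        simp only [Fin.ofNat_val_eq_self] at this
        rw [← this]
        split_ifs with h
        · rw [Nat.even_iff.mp h]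
        · rw [Nat.not_even_iff.mp h]
      refine ⟨(x (Sum.inr (Fin.ofNat n 0)), x (Sum.inr (Fin.ofNat n 1))), ?_⟩
      ext (k | k)
      · have hk : Even k.rev.val ↔ ¬ Even k.val := by
          have := k.isLt
          rw [Fin.val_rev]
          simp only [Nat.even_iff] at *
          omega
        rw [ker_inl hx, h3 k.rev]
        simp only [L, LinearMap.coe_mk, AddHom.coe_mk, Sum.elim_inl, hk]
        by_cases h : Even k.val <;> simp only [h, not_true, not_false_eq_true, if_true, if_false]
      · exact (h3 k).symm
    · rintro _ ⟨c, rfl⟩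
      rw [LinearMap.mem_ker]
      ext i j
      have hk : Even (j.rev - i).val ↔ ¬ Even (j - i).val := by
        obtain ⟨t, ht⟩ := hn
        have hm : ∀ a : ℕ, a % n % 2 = a % 2 :=
          fun a => Nat.mod_mod_of_dvd a ⟨t, by omega⟩
        have := i.isLt
        have := j.isLt
        simp only [Fin.val_sub, Fin.val_rev, Nat.even_iff, hm]
        omega
      rw [dihedralMap_apply]
      simp only [L, LinearMap.coe_mk, AddHom.coe_mk, Sum.elim_inl, Sum.elim_inr, hk]
      by_cases h : Even (j - i).val <;> simp [h]
  rw [hL, LinearMap.finrank_range_of_inj]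
  · simp
  · intro c d h
    have h0 := congrFun h (Sum.inr ⟨0, by omega⟩)
    have h1 := congrFun h (Sum.inr ⟨1, by omega⟩)
    simp [L] at h0 h1
    exact Prod.ext h0 h1

/-- The coefficients of a linear relation among the `2 * n` permutation matrices sum to `0`, because
those of the rotations and of the reflections cancel in pairs; so the relation is an affine one. -/
theorem ker_le_vectorSpan (n : ℕ) [NeZero n] :
    LinearMap.ker (dihedralMap n) ≤
      vectorSpan ℝ (Set.range (fun s : Fin n ⊕ Fin n => (Pi.single s 1 : _ → ℝ))) := by
  intro x hx
  rw [LinearMap.mem_ker] at hx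
  have hs : ∑ s, x s = 0 := by
    rw [Fintype.sum_sum_type, Finset.sum_congr rfl fun j _ => ker_inl hx j,
      Finset.sum_neg_distrib,
      ← Equiv.sum_comp Fin.revPerm (fun j => x (Sum.inr j))]
    exact neg_add_cancel _
  have := weightedVSub_mem_vectorSpan (k := ℝ) (s := Finset.univ) hs
    (fun s : Fin n ⊕ Fin n => (Pi.single s 1 : _ → ℝ))
  rw [Finset.weightedVSub_eq_linear_combination (hw := hs)] at this
  convert this
  ext t
  simp [Finset.sum_apply, Pi.single_apply]

/-- The dimension of the affine span of `P(D_n)` is `2n − 2` if `n` is odd and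
`2n − 3` if `n` is even. -/
theorem dim_dihedral (n : ℕ) (hn : 2 < n) :
    Module.finrank ℝ (affineSpan ℝ (permPolytope n (dihedralSet n))).direction
      = if Odd n then 2 * n - 2 else 2 * n - 3 := by
  have : NeZero n := ⟨by omega⟩
  rw [permPolytope, affineSpan_convexHull, direction_affineSpan, permMatrix_image_dihedralSet]
  set V := vectorSpan ℝ (Set.range (fun s : Fin n ⊕ Fin n => (Pi.single s 1 : _ → ℝ))) with hV
  have hmap : vectorSpan ℝ (dihedralMap n ''
      Set.range (fun s : Fin n ⊕ Fin n => (Pi.single s 1 : _ → ℝ))) = V.map (dihedralMap n) := by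
    have := AffineMap.map_vectorSpan (dihedralMap n).toAffineMap
      (s := Set.range (fun s : Fin n ⊕ Fin n => (Pi.single s 1 : _ → ℝ)))
    exact this.symm
  rw [hmap]
  have hVdim : Module.finrank ℝ V = 2 * n - 1 := by
    have hli : AffineIndependent ℝ (fun s : Fin n ⊕ Fin n => (Pi.single s 1 : _ → ℝ)) :=
      (Pi.linearIndependent_single_one (Fin n ⊕ Fin n) ℝ).affineIndependent
    exact hli.finrank_vectorSpan (by simp; omega)
  have hker : Module.finrank ℝ (LinearMap.ker ((dihedralMap n).domRestrict V))
      = Module.finrank ℝ (LinearMap.ker (dihedralMap n)) := by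
    rw [LinearMap.ker_domRestrict]
    exact (Submodule.comapSubtypeEquivOfLe (ker_le_vectorSpan n)).finrank_eq
  have hrn := LinearMap.finrank_range_add_finrank_ker ((dihedralMap n).domRestrict V)
  rw [LinearMap.range_domRestrict, hker, hVdim] at hrn
  split_ifs with h
  · rw [finrank_ker_odd n h] at hrn
    omega
  · rw [finrank_ker_even n (Nat.not_odd_iff_even.mp h)] at hrn
    omega
end
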